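/- Let R be a commutative noetherian ring, p a prime ideal, and k an integer with 0 < k ≤ depth(R_p). Then for an R-module M the following are equivalent: (i) Tor^R_j(S_k(pR_p; R_p), M) = 0 for all j ≥ 1; (ii) depth_{R_p}(M_p) ≥ k; (iii) p is not an associated prime of the direct sum ⊕_{i=0}^{k-1} Ω_{-i}(M) of the first k minimal cosyzygies of M. -/

import Mathlib

open CategoryTheory Opposite

noncomputable section

/-- Vanishing of the `n`-th Ext group of two `R`-modules. -/
def extV (R : Type) [Ring R] (M N : ModuleCat.{0} R) (n : ℕ) : Prop :=
  Subsingleton (((_root_.Ext ℤ (ModuleCat.{0} R) n).obj (op M)).obj N)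

/-- Vanishing of the `n`-th Tor group of two `R`-modules. -/
def torV (R : Type) [CommRing R] (M N : ModuleCat.{0} R) (n : ℕ) : Prop :=
  Subsingleton (((Tor (ModuleCat.{0} R) n).obj M).obj N)

/-- `f : A →ₗ[R] B` is a pure monomorphism. -/
def IsPureMono (R : Type) [CommRing R] {A B : Type} [AddCommGroup A] [Module R A]
    [AddCommGroup B] [Module R B] (f : A →ₗ[R] B) : Prop :=
  Function.Injective f ∧
    ∀ (Q : Type) [AddCommGroup Q] [Module R Q], Function.Injective (LinearMap.lTensor Q f)

/-- An `R`-module `N` is pure-injective if it is injective with respect to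
pure monomorphisms. -/
def PureInjective (R : Type) [CommRing R] (N : Type) [AddCommGroup N] [Module R N] : Prop :=
  ∀ (A B : Type) [AddCommGroup A] [Module R A] [AddCommGroup B] [Module R B]
    (f : A →ₗ[R] B), IsPureMono R f → ∀ g : A →ₗ[R] N, ∃ h : B →ₗ[R] N, h.comp f = g

/-- `N` has injective dimension at most `n`. -/
def injDimLE (R : Type) [Ring R] (N : ModuleCat.{0} R) (n : ℕ) : Prop :=
  ∀ M : ModuleCat.{0} R, ∀ j : ℕ, n < j → extV R M N j

/-- `M` has projective dimension at most `n`. -/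
def projDimLE (R : Type) [Ring R] (M : ModuleCat.{0} R) (n : ℕ) : Prop :=
  ∀ N : ModuleCat.{0} R, ∀ j : ℕ, n < j → extV R M N j

/-- `M` has flat dimension at most `n`. -/
def flatDimLE (R : Type) [CommRing R] (M : ModuleCat.{0} R) (n : ℕ) : Prop :=
  ∀ N : ModuleCat.{0} R, ∀ j : ℕ, n < j → torV R M N j

/-- The depth of a module over a commutative local ring. -/
def rdepth (A : Type) [CommRing A] [IsLocalRing A] (M : Type) [AddCommGroup M]
    [Module A M] : ℕ∞ :=
  sInf {n : ℕ∞ | ∃ i : ℕ, n = (i : ℕ∞) ∧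
    ¬ extV A (ModuleCat.of A (IsLocalRing.ResidueField A)) (ModuleCat.of A M) i}

/-- `depth(R_p)`. -/
def ringDepthAt (R : Type) [CommRing R] (p : PrimeSpectrum R) : ℕ∞ :=
  rdepth (Localization.AtPrime p.asIdeal) (Localization.AtPrime p.asIdeal)

/-- `depth_{R_p}(M_p)`. -/
def depthAt (R : Type) [CommRing R] (p : PrimeSpectrum R) (M : Type) [AddCommGroup M]
    [Module R M] : ℕ∞ :=
  rdepth (Localization.AtPrime p.asIdeal) (LocalizedModule p.asIdeal.primeCompl M)

/-- `f : M →ₗ[R] E` exhibits `E` as an injective envelope of `M`. -/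
def IsInjectiveEnvelope (R : Type) [Ring R] {M E : Type} [AddCommGroup M] [Module R M]
    [AddCommGroup E] [Module R E] (f : M →ₗ[R] E) : Prop :=
  Module.Injective R E ∧ Function.Injective f ∧
    ∀ K : Submodule R E, K ≠ ⊥ → K ⊓ LinearMap.range f ≠ ⊥

/-- The degree-`i` term of the Koszul cochain complex on `ℓ` generators over `A`:
a free module on the `i`-element subsets of `Fin ℓ`. -/
abbrev KosTerm (A : Type) [CommRing A] (ℓ i : ℕ) : Type :=
  {s : Finset (Fin ℓ) // s.card = i} → A

/-- The Koszul cochain differential (for the sequence `x`), from degree `i`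
to degree `i+1`. -/
def kosD (A : Type) [CommRing A] {ℓ : ℕ} (x : Fin ℓ → A) (i : ℕ) :
    KosTerm A ℓ i →ₗ[A] KosTerm A ℓ (i + 1) where
  toFun f T := ∑ t ∈ T.1.attach,
    ((-1 : A) ^ ((T.1.filter (fun s => s < t.1)).card) * x t.1) •
      f ⟨T.1.erase t.1, by
        rw [Finset.card_erase_of_mem t.2, T.2]; omega⟩
  map_add' f g := by
    funext T
    simp [mul_add, Finset.sum_add_distrib]
  map_smul' a f := by
    funext T
    rw [RingHom.id_apply]
    simp only [Pi.smul_apply, smul_eq_mul, Finset.mul_sum]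
    exact Finset.sum_congr rfl fun t _ => by ring

/-- `S_k(x; A)`: the cokernel of the `(k-1)`-st differential of the Koszul cochain
complex of the sequence `x` (with `S_0 = A`). -/
def KosCoker (A : Type) [CommRing A] {ℓ : ℕ} (x : Fin ℓ → A) : ℕ → Type
  | 0 => A
  | m + 1 => KosTerm A ℓ (m + 1) ⧸ LinearMap.range (kosD A x m)

instance kosCokerAddCommGroup (A : Type) [CommRing A] {ℓ : ℕ} (x : Fin ℓ → A) :
    (k : ℕ) → AddCommGroup (KosCoker A x k)
  | 0 => inferInstanceAs (AddCommGroup A)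
  | m + 1 => inferInstanceAs
      (AddCommGroup (KosTerm A ℓ (m + 1) ⧸ LinearMap.range (kosD A x m)))

instance kosCokerModule (A : Type) [CommRing A] {ℓ : ℕ} (x : Fin ℓ → A) :
    (k : ℕ) → Module A (KosCoker A x k)
  | 0 => inferInstanceAs (Module A A)
  | m + 1 => inferInstanceAs
      (Module A (KosTerm A ℓ (m + 1) ⧸ LinearMap.range (kosD A x m)))

/-- The `R`-module structure on `S_k(x; A)` obtained by restriction of scalars. -/
instance kosCokerModule' (R A : Type) [CommRing R] [CommRing A] [Algebra R A]
    {ℓ : ℕ} (x : Fin ℓ → A) (k : ℕ) : Module R (KosCoker A x k) :=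
  Module.compHom _ (algebraMap R A)

/-- A choice of minimal injective coresolution data for `M`: `C n` is the `n`-th
cosyzygy obtained by successively taking injective envelopes. -/
structure CosyzygySeq (R : Type) [CommRing R] (M : Type) [AddCommGroup M] [Module R M] :
    Type 1 where
  C : ℕ → ModuleCat.{0} R
  iso0 : (↥(C 0)) ≃ₗ[R] M
  E : ℕ → ModuleCat.{0} R
  emb : ∀ n, (↥(C n)) →ₗ[R] (↥(E n))
  env : ∀ n, IsInjectiveEnvelope R (emb n)
  isoSucc : ∀ n, (↥(C (n + 1))) ≃ₗ[R] ((↥(E n)) ⧸ LinearMap.range (emb n))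

/-!
Let `I` be a finitely generated ideal of a commutative ring `A`, generated by `x`. Vanishing of
`Ext^n_A(A/I, N)` and vanishing of the Koszul cohomology `H^n(x; N)` have three properties in
common: in degree `0` either means that `N` has no `I`-torsion, both hold in all degrees when
`I · End_A(N) = End_A(N)`, and both shift along short exact sequences whose middle term is acyclic.
A module `N` without `I`-torsion embeds in `∏ⱼ N[1/xⱼ]`, which satisfies `I · End = End`. Hence, by
induction on `k`, these properties determine whether a vanishing statement holds in all degrees
below `k`, so depth can be computed with the Koszul complex.

For the cosyzygies: an `I`-torsion-free injective module is a retract of such a product, so an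
injective envelope over `R` localizes at `p` to a short exact sequence that lowers depth by one,
as soon as `p` is not associated to the module.

For `Tor`: below the depth of `R_p` there are short exact sequences `0 → Sᵢ → Kⁱ⁺¹ → Sᵢ₊₁ → 0` with
`Kⁱ⁺¹` flat over `R`. They reduce the vanishing of `Tor_j(S_k, M)` for all `j ≥ 1` to injectivity
of `Sᵢ ⊗ M → Kⁱ⁺¹ ⊗ M` for `i < k`, which is exactness in degree `i` of the Koszul complex of `M_p`.
-/

universe u v

section TorsionFree

open Submodule

variable {A : Type*} [CommRing A] {I : Ideal A}
variable {N N' : Type*} [AddCommGroup N] [Module A N] [AddCommGroup N'] [Module A N']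

theorem torsionBySet_eq_bot_iff {s : Set A} :
    torsionBySet A N s = ⊥ ↔ ∀ y : N, (∀ a ∈ s, a • y = 0) → y = 0 := by
  simp [eq_bot_iff, SetLike.le_def, mem_torsionBySet_iff]

theorem torsionBySet_eq_bot_of_injective {f : N →ₗ[A] N'} (hf : Function.Injective f)
    (h : torsionBySet A N' I = ⊥) : torsionBySet A N I = ⊥ := by
  rw [torsionBySet_eq_bot_iff] at h ⊢
  exact fun y hy ↦ (map_eq_zero_iff f hf).1 <| h _ fun a ha ↦ by rw [← map_smul, hy a ha, map_zero]

theorem torsionBySet_pow_eq_bot (h : torsionBySet A N I = ⊥) (n : ℕ) :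
    torsionBySet A N (I ^ n : Ideal A) = ⊥ := by
  induction n with
  | zero => simp
  | succ n ih =>
    rw [torsionBySet_eq_bot_iff] at h ih ⊢
    refine fun y hy ↦ ih y fun a ha ↦ h _ fun b hb ↦ ?_
    rw [smul_smul, mul_comm]
    exact hy _ (pow_succ I n ▸ Ideal.mul_mem_mul ha hb)

theorem eq_zero_of_le_radical_torsionOf (hI : I.FG) (h : torsionBySet A N I = ⊥) {y : N}
    (hy : I ≤ (Ideal.torsionOf A N y).radical) : y = 0 := by
  obtain ⟨n, hn⟩ := Ideal.exists_pow_le_of_le_radical_of_fg hy hI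
  exact torsionBySet_eq_bot_iff.1 (torsionBySet_pow_eq_bot h n) y fun a ha ↦ hn ha

variable (I N) in
/-- `I · End_A(N) = End_A(N)`, that is, `∑ aⱼ vⱼ = 1` for some `aⱼ ∈ I` and endomorphisms `vⱼ`. An
additive functor of `N` that takes values in modules killed by `I` vanishes on such modules, which
serve here as the acyclic objects for dimension shifting. -/
def GeneratesEnd : Prop :=
  (1 : Module.End A N) ∈ I • (⊤ : Submodule A (Module.End A N))

theorem GeneratesEnd.exists_sum_smul {ι : Type*} [Fintype ι] {x : ι → A}
    (h : GeneratesEnd (Ideal.span (Set.range x)) N) :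
    ∃ v : ι → Module.End A N, ∑ j, x j • v j = 1 := by
  refine smul_induction_on (p := fun φ : Module.End A N ↦
    ∃ v : ι → Module.End A N, ∑ j, x j • v j = φ) h ?_ ?_
  · rintro a ha φ -
    obtain ⟨c, rfl⟩ := Ideal.mem_span_range_iff_exists_fun.1 ha
    exact ⟨fun j ↦ c j • φ, by simp only [Finset.sum_smul, mul_smul, smul_comm (x _)]⟩
  · rintro _ _ ⟨v, rfl⟩ ⟨w, rfl⟩
    exact ⟨v + w, by simp only [Pi.add_apply, smul_add, Finset.sum_add_distrib]⟩

theorem comp_mem_smul_top_of_generatesEnd (h : GeneratesEnd I N) (r : N →ₗ[A] N')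
    (i : N' →ₗ[A] N) : r ∘ₗ i ∈ I • (⊤ : Submodule A (Module.End A N')) := by
  have hmap := mem_map_of_mem (f := LinearMap.lcomp A N' i ∘ₗ LinearMap.llcomp A N N N' r) h
  rw [map_smul''] at hmap
  exact Submodule.smul_mono le_rfl le_top hmap

theorem GeneratesEnd.of_leftInverse (h : GeneratesEnd I N) {r : N →ₗ[A] N'} {i : N' →ₗ[A] N}
    (hri : Function.LeftInverse r i) : GeneratesEnd I N' := by
  have := comp_mem_smul_top_of_generatesEnd h r i
  rwa [show r ∘ₗ i = 1 from LinearMap.ext hri] at this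

theorem GeneratesEnd.pi {ι : Type*} [Finite ι] {F : ι → Type*} [∀ i, AddCommGroup (F i)]
    [∀ i, Module A (F i)] (h : ∀ i, GeneratesEnd I (F i)) : GeneratesEnd I (∀ i, F i) := by
  classical
  cases nonempty_fintype ι
  have hsum : (1 : Module.End A (∀ i, F i)) =
      ∑ i, LinearMap.single A F i ∘ₗ LinearMap.proj i := by
    ext i y j
    simp [Finset.sum_apply]
  rw [GeneratesEnd, hsum]
  exact sum_mem fun i _ ↦ comp_mem_smul_top_of_generatesEnd (h i) _ _

theorem generatesEnd_localizedModule_powers {a : A} (ha : a ∈ I) :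
    GeneratesEnd I (LocalizedModule (Submonoid.powers a) N) := by
  have hdiv : (1 : Module.End A (LocalizedModule (Submonoid.powers a) N)) =
      a • LocalizedModule.divBy ⟨a, Submonoid.mem_powers a⟩ :=
    LinearMap.ext fun y ↦ (LocalizedModule.mul_by_divBy ⟨a, Submonoid.mem_powers a⟩ y).symm
  rw [GeneratesEnd, hdiv]
  exact smul_mem_smul ha mem_top

theorem exists_injective_generatesEnd {A : Type u} {N : Type v} [CommRing A] [AddCommGroup N]
    [Module A N] {I : Ideal A} (hI : I.FG) (h : torsionBySet A N I = ⊥) :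
    ∃ (F : Type (max u v)) (_ : AddCommGroup F) (_ : Module A F) (i : N →ₗ[A] F),
      Function.Injective i ∧ GeneratesEnd I F := by
  obtain ⟨s, hs⟩ := id hI
  refine ⟨∀ a : s, LocalizedModule (Submonoid.powers a.1) N, inferInstance, inferInstance,
    LinearMap.pi fun a ↦ LocalizedModule.mkLinearMap _ N, ?_,
    .pi fun a ↦ generatesEnd_localizedModule_powers (hs.le (subset_span a.2))⟩
  rw [injective_iff_map_eq_zero]
  refine fun y hy ↦ eq_zero_of_le_radical_torsionOf hI h (hs ▸ span_le.2 fun a ha ↦ ?_)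
  obtain ⟨_, ⟨n, rfl⟩, hn⟩ :=
    LocalizedModule.mem_ker_mkLinearMap_iff.1 (congrFun hy ⟨a, ha⟩)
  exact ⟨n, hn⟩

end TorsionFree

section Injective

variable {A : Type u} [CommRing A] {I : Ideal A} {E : Type u} [AddCommGroup E] [Module A E]

theorem generatesEnd_of_injective [hE : Module.Injective A E] (hI : I.FG)
    (h : Submodule.torsionBySet A E I = ⊥) : GeneratesEnd I E := by
  obtain ⟨F, _, _, i, hi, hF⟩ := exists_injective_generatesEnd hI h
  obtain ⟨r, hr⟩ := hE.out i hi LinearMap.id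
  exact hF.of_leftInverse hr

end Injective

/-- The properties of the vanishing of `Ext^n_A(A/I, -)` that determine it below the depth, for an
arbitrary predicate `V N n` on modules and degrees. -/
structure DetectsTorsion {A : Type u} [CommRing A] (I : Ideal A)
    (V : ModuleCat.{u} A → ℕ → Prop) : Prop where
  zero_iff (N : ModuleCat.{u} A) : V N 0 ↔ Submodule.torsionBySet A N I = ⊥
  succ_iff {S : ShortComplex (ModuleCat.{u} A)} (hS : S.ShortExact) (hF : ∀ n, V S.X₂ n) (n : ℕ) :
    V S.X₁ (n + 1) ↔ V S.X₃ n
  of_generatesEnd {N : ModuleCat.{u} A} (hN : GeneratesEnd I N) (n : ℕ) : V N n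

namespace DetectsTorsion

variable {A : Type u} [CommRing A] {I : Ideal A} {V V' : ModuleCat.{u} A → ℕ → Prop}

theorem forall_lt_succ_iff (hV : DetectsTorsion I V) {S : ShortComplex (ModuleCat.{u} A)}
    (hS : S.ShortExact) (hF : ∀ n, V S.X₂ n) (k : ℕ) :
    (∀ n < k + 1, V S.X₁ n) ↔ ∀ n < k, V S.X₃ n := by
  have h0 : V S.X₁ 0 := (hV.zero_iff _).2 <|
    torsionBySet_eq_bot_of_injective hS.moduleCat_injective_f ((hV.zero_iff _).1 (hF 0))
  simp only [Nat.forall_lt_succ_left, h0, hV.succ_iff hS hF, true_and]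

theorem forall_lt_iff (hI : I.FG) (hV : DetectsTorsion I V) (hV' : DetectsTorsion I V') (k : ℕ)
    (N : ModuleCat.{u} A) : (∀ n < k, V N n) ↔ ∀ n < k, V' N n := by
  induction k generalizing N with
  | zero => simp
  | succ k ih =>
    by_cases h : Submodule.torsionBySet A N I = ⊥
    · obtain ⟨F, _, _, i, hi, hF⟩ := exists_injective_generatesEnd hI h
      have hS : (ModuleCat.shortComplexOfCompEqZero i _ (LinearMap.range_mkQ_comp i)).ShortExact :=
        ModuleCat.shortComplex_shortExact _ (LinearMap.exact_map_mkQ_range i) hi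
          (Submodule.mkQ_surjective _)
      have hF : GeneratesEnd I (ModuleCat.of A F) := hF
      exact (hV.forall_lt_succ_iff hS (hV.of_generatesEnd hF) k).trans <| (ih _).trans
        (hV'.forall_lt_succ_iff hS (hV'.of_generatesEnd hF) k).symm
    · exact iff_of_false (fun H ↦ h ((hV.zero_iff N).1 (H 0 k.succ_pos)))
        fun H ↦ h ((hV'.zero_iff N).1 (H 0 k.succ_pos))

end DetectsTorsion

section Ext

open Abelian

section LeftDerived

variable {k : Type*} [Ring k] {C : Type u} [Category.{v} C] [Abelian C] [Linear k C]
variable {X : C} (P : ProjectiveResolution X) (Y : C)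

theorem exactAt_linearYonedaObj_zero_iff :
    (P.complex.linearYonedaObj k Y).ExactAt 0 ↔ Subsingleton (X ⟶ Y) := by
  rw [HomologicalComplex.exactAt_iff' _ 0 0 1 (by simp) (by simp),
    ShortComplex.exact_iff_mono _ ((P.complex.linearYonedaObj k Y).shape 0 0 (by simp)),
    ModuleCat.mono_iff_injective]
  refine ⟨fun h ↦ subsingleton_of_forall_eq 0 fun f ↦ ?_, fun h ↦ ?_⟩
  · have hf : P.π.f 0 ≫ f = 0 := h <|
      (P.complex_d_comp_π_f_zero_assoc f).trans (Limits.zero_comp.trans (map_zero _).symm)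
    exact (cancel_epi (P.π.f 0)).1 (hf.trans Limits.comp_zero.symm)
  · refine (injective_iff_map_eq_zero _).2 fun f hf ↦ ?_
    obtain ⟨g, hg⟩ := Limits.Cofork.IsColimit.desc' P.isColimitCokernelCofork f
      (Eq.trans hf Limits.zero_comp.symm)
    exact hg.symm.trans ((congrArg _ (h.elim g 0)).trans Limits.comp_zero)

theorem exactAt_linearYonedaObj_succ_iff (n : ℕ) :
    (P.complex.linearYonedaObj k Y).ExactAt (n + 1) ↔
      ∀ f : P.complex.X (n + 1) ⟶ Y, P.complex.d (n + 2) (n + 1) ≫ f = 0 →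
        ∃ g, P.complex.d (n + 1) n ≫ g = f := by
  rw [HomologicalComplex.exactAt_iff' _ n (n + 1) (n + 2) (by simp) (by simp),
    ShortComplex.moduleCat_exact_iff]
  rfl

theorem subsingleton_ext_succ_iff [HasExt C] (n : ℕ) :
    Subsingleton (Ext X Y (n + 1)) ↔
      ∀ f : P.complex.X (n + 1) ⟶ Y, P.complex.d (n + 2) (n + 1) ≫ f = 0 →
        ∃ g, P.complex.d (n + 1) n ≫ g = f := by
  constructor
  · exact fun h f hf ↦ (P.extMk_eq_zero_iff f _ rfl hf n rfl).1 (Subsingleton.elim _ _)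
  · refine fun h ↦ subsingleton_of_forall_eq 0 fun e ↦ ?_
    obtain ⟨f, hf, rfl⟩ := P.extMk_surjective e (n + 2) rfl
    exact (P.extMk_eq_zero_iff f _ rfl hf n rfl).2 (h f hf)

variable (k X)

theorem subsingleton_leftDerived_ext_iff [EnoughProjectives C] [HasExt C] (n : ℕ) :
    Subsingleton (((_root_.Ext k C n).obj (op X)).obj Y) ↔ Subsingleton (Ext X Y n) := by
  let P := projectiveResolution X
  rw [← ModuleCat.isZero_iff_subsingleton, (P.isoExt n Y).isZero_iff,
    ← HomologicalComplex.exactAt_iff_isZero_homology]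
  cases n with
  | zero => rw [exactAt_linearYonedaObj_zero_iff, Ext.addEquiv₀.subsingleton_congr]
  | succ n => rw [exactAt_linearYonedaObj_succ_iff, subsingleton_ext_succ_iff P]

end LeftDerived

section Quotient

variable {A : Type u} [CommRing A] (I : Ideal A)

theorem subsingleton_linearMap_quotient_iff {N : Type*} [AddCommGroup N] [Module A N] :
    Subsingleton (A ⧸ I →ₗ[A] N) ↔ Submodule.torsionBySet A N I = ⊥ := by
  rw [torsionBySet_eq_bot_iff]
  refine ⟨fun h y hy ↦ ?_, fun h ↦ subsingleton_of_forall_eq 0 fun f ↦ ?_⟩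
  · have hle : I ≤ LinearMap.ker (LinearMap.toSpanSingleton A N y) := hy
    have := LinearMap.congr_fun (Subsingleton.elim (Submodule.liftQ I _ hle) 0) (Submodule.mkQ I 1)
    simpa only [Submodule.mkQ_apply, Submodule.liftQ_apply, LinearMap.toSpanSingleton_apply,
      one_smul, LinearMap.zero_apply] using this
  · refine Submodule.linearMap_qext _ <| LinearMap.ext_ring <| h _ fun a ha ↦ ?_
    rw [← map_smul, smul_eq_mul, mul_one, LinearMap.comp_apply, Submodule.mkQ_apply,
      (Submodule.Quotient.mk_eq_zero I).2 ha, map_zero]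

theorem smul_ext_quotient_eq_zero {a : A} (ha : a ∈ I) {N : ModuleCat.{u} A} {n : ℕ}
    (e : Ext (ModuleCat.of A (A ⧸ I)) N n) : a • e = 0 := by
  have h : a • 𝟙 (ModuleCat.of A (A ⧸ I)) = 0 := by
    refine ModuleCat.hom_ext <| LinearMap.ext fun y ↦ ?_
    have hI : Module.IsTorsionBySet A (A ⧸ I) I :=
      (Module.isTorsionBySet_quotient_iff I I).2 fun x _ hb ↦ I.mul_mem_right x hb
    exact @hI y ⟨a, ha⟩
  rw [← Ext.mk₀_id_comp e, ← Ext.smul_comp, ← Ext.mk₀_smul, h, Ext.mk₀_zero, Ext.zero_comp]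

theorem detectsTorsion_ext :
    DetectsTorsion I fun N n ↦ Subsingleton (Ext (ModuleCat.of A (A ⧸ I)) N n) where
  zero_iff N := by
    rw [Ext.addEquiv₀.subsingleton_congr, ModuleCat.homEquiv.subsingleton_congr,
      subsingleton_linearMap_quotient_iff]
  succ_iff {S} hS hF n := by
    constructor <;> refine fun h ↦ subsingleton_of_forall_eq 0 fun e ↦ ?_
    · obtain ⟨e', rfl⟩ := Ext.covariant_sequence_exact₃ _ hS e rfl (Subsingleton.elim _ _)
      rw [Subsingleton.elim e' 0, Ext.zero_comp]
    · obtain ⟨e', rfl⟩ := Ext.covariant_sequence_exact₁ _ hS e (Subsingleton.elim _ _) rfl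
      rw [Subsingleton.elim e' 0, Ext.zero_comp]
  of_generatesEnd {N} hN n := by
    refine subsingleton_of_forall_eq 0 fun e ↦ ?_
    have key : e.comp (Ext.mk₀ (ModuleCat.ofHom (1 : Module.End A N))) (add_zero n) = 0 := by
      refine Submodule.smul_induction_on
        (p := fun φ ↦ e.comp (Ext.mk₀ (ModuleCat.ofHom φ)) (add_zero n) = 0) hN ?_ ?_
      · intro a ha φ _
        rw [show ModuleCat.ofHom (a • φ) = a • ModuleCat.ofHom φ from rfl, Ext.mk₀_smul,
          Ext.comp_smul, smul_ext_quotient_eq_zero I ha]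
      · intro φ ψ hφ hψ
        rw [ModuleCat.ofHom_add, Ext.mk₀_add, Ext.comp_add, hφ, hψ, add_zero]
    exact (Ext.comp_mk₀_id e).symm.trans key

end Quotient

end Ext

section Depth

variable {A : Type} [CommRing A] [IsLocalRing A]
variable {N N' : Type} [AddCommGroup N] [Module A N] [AddCommGroup N'] [Module A N']

theorem rdepth_congr (e : N ≃ₗ[A] N') : rdepth A N = rdepth A N' := by
  have h (n : ℕ) : extV A (ModuleCat.of A (IsLocalRing.ResidueField A)) (ModuleCat.of A N) n ↔
      extV A (ModuleCat.of A (IsLocalRing.ResidueField A)) (ModuleCat.of A N') n :=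
    (((_root_.Ext ℤ (ModuleCat A) n).obj _).mapIso e.toModuleIso).toLinearEquiv.subsingleton_congr
  simp only [rdepth, h]

theorem le_rdepth_iff_forall_lt_extV (k : ℕ) : (k : ℕ∞) ≤ rdepth A N ↔
    ∀ n < k, extV A (ModuleCat.of A (IsLocalRing.ResidueField A)) (ModuleCat.of A N) n := by
  refine le_sInf_iff.trans ⟨fun h n hn ↦ ?_, ?_⟩
  · by_contra hne
    exact hn.not_ge (Nat.cast_le.1 (h n ⟨n, rfl, hne⟩))
  · rintro h _ ⟨n, rfl, hne⟩
    exact Nat.cast_le.2 (not_lt.1 fun hn ↦ hne (h n hn))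

theorem le_rdepth_iff_forall_lt (hA : (IsLocalRing.maximalIdeal A).FG)
    {V : ModuleCat.{0} A → ℕ → Prop} (hV : DetectsTorsion (IsLocalRing.maximalIdeal A) V) (k : ℕ) :
    (k : ℕ∞) ≤ rdepth A N ↔ ∀ n < k, V (ModuleCat.of A N) n := by
  rw [le_rdepth_iff_forall_lt_extV,
    ← (detectsTorsion_ext (IsLocalRing.maximalIdeal A)).forall_lt_iff hA hV]
  exact forall₂_congr fun n _ ↦ subsingleton_leftDerived_ext_iff ..

end Depth

section Koszul

variable {A : Type u} [CommRing A] {ℓ : ℕ}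

variable (A) in
/-- The sign of the `t`-component of the Koszul differential at `T`. -/
def koszulSign (T : Finset (Fin ℓ)) (t : Fin ℓ) : A := (-1) ^ (T.filter (· < t)).card

theorem koszulSign_mul_self (T : Finset (Fin ℓ)) (t : Fin ℓ) :
    koszulSign A T t * koszulSign A T t = 1 := by
  rw [koszulSign, ← mul_pow, neg_one_mul, neg_neg, one_pow]

theorem koszulSign_insert_self (T : Finset (Fin ℓ)) (t : Fin ℓ) :
    koszulSign A (insert t T) t = koszulSign A T t := by
  rw [koszulSign, Finset.filter_insert, if_neg (lt_irrefl t), koszulSign]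

theorem koszulSign_insert {T : Finset (Fin ℓ)} {j : Fin ℓ} (hj : j ∉ T) (t : Fin ℓ) :
    koszulSign A (insert j T) t = (if j < t then -1 else 1) * koszulSign A T t := by
  rw [koszulSign, Finset.filter_insert, koszulSign]
  split_ifs with h
  · rw [Finset.card_insert_of_notMem (by simp [hj]), pow_succ, mul_comm]
  · rw [one_mul]

theorem koszulSign_mul_koszulSign_insert {T : Finset (Fin ℓ)} {t j : Fin ℓ} (ht : t ∈ T)
    (hj : j ∉ T) : koszulSign A T j * koszulSign A (insert j T) t =
      -(koszulSign A T t * koszulSign A (T.erase t) j) := by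
  obtain ⟨U, hU, rfl⟩ : ∃ U, t ∉ U ∧ T = insert t U :=
    ⟨T.erase t, T.notMem_erase t, (Finset.insert_erase ht).symm⟩
  rw [Finset.erase_insert hU, koszulSign_insert hj, koszulSign_insert hU, koszulSign_insert_self]
  rcases lt_or_gt_of_ne (ne_of_mem_of_not_mem ht hj) with h | h <;>
    simp only [h, h.not_gt, if_true, if_false] <;> ring

variable (x : Fin ℓ → A) (N : Type*) [AddCommGroup N] [Module A N]

/-- The Koszul differential on all degrees at once. -/
def koszulTotalD : (Finset (Fin ℓ) → N) →ₗ[A] (Finset (Fin ℓ) → N) where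
  toFun f T := ∑ t ∈ T, (koszulSign A T t * x t) • f (T.erase t)
  map_add' f g := by
    ext T
    simp [Finset.sum_add_distrib]
  map_smul' a f := by
    ext T
    simp [Finset.smul_sum, smul_comm a]

variable (A) in
/-- The contraction of the Koszul complex with the `j`-th coordinate: a null-homotopy of
multiplication by `x j`. -/
def koszulContraction (j : Fin ℓ) : (Finset (Fin ℓ) → N) →ₗ[A] (Finset (Fin ℓ) → N) where
  toFun f T := if j ∈ T then 0 else koszulSign A T j • f (insert j T)
  map_add' f g := by
    ext T
    by_cases hj : j ∈ T <;> simp [hj]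
  map_smul' a f := by
    ext T
    by_cases hj : j ∈ T <;> simp [hj, smul_comm a]

variable {N}

theorem koszulTotalD_apply (f : Finset (Fin ℓ) → N) (T : Finset (Fin ℓ)) :
    koszulTotalD x N f T = ∑ t ∈ T, (koszulSign A T t * x t) • f (T.erase t) :=
  rfl

theorem koszulContraction_of_mem {j : Fin ℓ} {T : Finset (Fin ℓ)} (hj : j ∈ T)
    (f : Finset (Fin ℓ) → N) : koszulContraction A N j f T = 0 :=
  if_pos hj

theorem koszulContraction_of_notMem {j : Fin ℓ} {T : Finset (Fin ℓ)} (hj : j ∉ T)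
    (f : Finset (Fin ℓ) → N) :
    koszulContraction A N j f T = koszulSign A T j • f (insert j T) :=
  if_neg hj

theorem koszulTotalD_contraction_of_mem {j : Fin ℓ} {T : Finset (Fin ℓ)} (hj : j ∈ T)
    (f : Finset (Fin ℓ) → N) : koszulTotalD x N (koszulContraction A N j f) T = x j • f T := by
  rw [koszulTotalD_apply, Finset.sum_eq_single_of_mem j hj fun t _ htj ↦ by
    rw [koszulContraction_of_mem (Finset.mem_erase.2 ⟨htj.symm, hj⟩), smul_zero]]
  have hsign : koszulSign A (T.erase j) j = koszulSign A T j := by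
    rw [← koszulSign_insert_self, Finset.insert_erase hj]
  rw [koszulContraction_of_notMem (T.notMem_erase j), hsign, Finset.insert_erase hj, smul_smul,
    mul_right_comm, koszulSign_mul_self, one_mul]

theorem koszulTotalD_contraction_add (j : Fin ℓ) (f : Finset (Fin ℓ) → N) :
    koszulTotalD x N (koszulContraction A N j f) + koszulContraction A N j (koszulTotalD x N f) =
      x j • f := by
  ext T
  rw [Pi.add_apply, Pi.smul_apply]
  by_cases hj : j ∈ T
  · rw [koszulTotalD_contraction_of_mem x hj, koszulContraction_of_mem hj, add_zero]
  · rw [koszulContraction_of_notMem hj, koszulTotalD_apply, koszulTotalD_apply,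
      Finset.sum_insert hj, Finset.erase_insert hj, koszulSign_insert_self, smul_add, smul_smul,
      ← mul_assoc, koszulSign_mul_self, one_mul, add_left_comm, Finset.smul_sum,
      ← Finset.sum_add_distrib, add_eq_left]
    refine Finset.sum_eq_zero fun t ht ↦ ?_
    have htj : j ≠ t := (ne_of_mem_of_not_mem ht hj).symm
    rw [koszulContraction_of_notMem fun h ↦ hj (Finset.mem_of_mem_erase h), smul_smul, smul_smul,
      Finset.erase_insert_of_ne htj, ← add_smul, ← mul_assoc,
      koszulSign_mul_koszulSign_insert ht hj]
    convert zero_smul A _ using 2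
    ring

theorem koszulTotalD_sq_contraction (j : Fin ℓ) (f : Finset (Fin ℓ) → N) :
    koszulTotalD x N (koszulTotalD x N (koszulContraction A N j f)) =
      koszulContraction A N j (koszulTotalD x N (koszulTotalD x N f)) := by
  rw [eq_sub_of_add_eq (koszulTotalD_contraction_add x j f), map_sub, map_smul,
    ← koszulTotalD_contraction_add x j (koszulTotalD x N f), add_sub_cancel_left]

theorem koszulTotalD_koszulTotalD (f : Finset (Fin ℓ) → N) :
    koszulTotalD x N (koszulTotalD x N f) = 0 := by
  ext T
  induction T using Finset.induction_on generalizing f with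
  | empty => rfl
  | insert j T hj ih =>
    have h := congrFun (koszulTotalD_sq_contraction x j f) T
    rw [ih, koszulContraction_of_notMem hj] at h
    simpa only [smul_smul, koszulSign_mul_self, one_smul, Pi.zero_apply, smul_zero] using
      congrArg (koszulSign A T j • ·) h.symm

theorem koszulTotalD_compLeft {N' : Type*} [AddCommGroup N'] [Module A N'] (φ : N →ₗ[A] N')
    (f : Finset (Fin ℓ) → N) :
    koszulTotalD x N' (φ.compLeft _ f) = φ.compLeft _ (koszulTotalD x N f) := by
  ext T
  simp [koszulTotalD_apply]

theorem exists_koszulTotalD_eq (hN : GeneratesEnd (Ideal.span (Set.range x)) N)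
    {f : Finset (Fin ℓ) → N} (hf : koszulTotalD x N f = 0) : ∃ g, koszulTotalD x N g = f := by
  obtain ⟨v, hv⟩ := hN.exists_sum_smul
  have hv' (y : N) : ∑ j, x j • v j y = y := by
    simpa using LinearMap.congr_fun hv y
  refine ⟨∑ j, koszulContraction A N j ((v j).compLeft _ f), ?_⟩
  have hterm (j : Fin ℓ) : koszulTotalD x N (koszulContraction A N j ((v j).compLeft _ f)) =
      x j • (v j).compLeft _ f := by
    simpa only [koszulTotalD_compLeft, hf, map_zero, add_zero] using
      koszulTotalD_contraction_add x j ((v j).compLeft _ f)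
  ext T
  simp only [map_sum, hterm, Finset.sum_apply]
  exact hv' (f T)

variable (A ℓ N) in
/-- Restriction to the `i`-element subsets: the degree `i` component of a Koszul cochain. -/
def koszulComponent (i : ℕ) :
    (Finset (Fin ℓ) → N) →ₗ[A] ({s : Finset (Fin ℓ) // s.card = i} → N) :=
  LinearMap.funLeft A N Subtype.val

variable (A ℓ N) in
/-- Extension by zero of a Koszul cochain of degree `i` to all subsets. -/
def koszulExtend (i : ℕ) :
    ({s : Finset (Fin ℓ) // s.card = i} → N) →ₗ[A] (Finset (Fin ℓ) → N) where
  toFun f T := if h : T.card = i then f ⟨T, h⟩ else 0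
  map_add' f g := by
    ext T
    by_cases h : T.card = i <;> simp [h]
  map_smul' a f := by
    ext T
    by_cases h : T.card = i <;> simp [h]

variable (N) in
/-- The Koszul cochain differential with coefficients in `N`; for `N = A` this is `kosD`. -/
def koszulD (i : ℕ) :
    ({s : Finset (Fin ℓ) // s.card = i} → N) →ₗ[A] ({s : Finset (Fin ℓ) // s.card = i + 1} → N) :=
  koszulComponent A ℓ N (i + 1) ∘ₗ koszulTotalD x N ∘ₗ koszulExtend A ℓ N i

variable {i : ℕ}

theorem koszulExtend_of_card_eq (f : {s : Finset (Fin ℓ) // s.card = i} → N) {T : Finset (Fin ℓ)}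
    (h : T.card = i) : koszulExtend A ℓ N i f T = f ⟨T, h⟩ :=
  dif_pos h

theorem koszulExtend_of_card_ne (f : {s : Finset (Fin ℓ) // s.card = i} → N) {T : Finset (Fin ℓ)}
    (h : T.card ≠ i) : koszulExtend A ℓ N i f T = 0 :=
  dif_neg h

theorem koszulComponent_extend (f : {s : Finset (Fin ℓ) // s.card = i} → N) :
    koszulComponent A ℓ N i (koszulExtend A ℓ N i f) = f :=
  funext fun T ↦ koszulExtend_of_card_eq (A := A) f T.2

theorem card_erase_of_mem_of_card_eq_succ {T : Finset (Fin ℓ)} {t : Fin ℓ} (ht : t ∈ T) :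
    (T.erase t).card = i ↔ T.card = i + 1 := by
  rw [← Finset.card_erase_add_one ht, add_left_inj]

theorem koszulD_apply (f : {s : Finset (Fin ℓ) // s.card = i} → N)
    (T : {s : Finset (Fin ℓ) // s.card = i + 1}) :
    koszulD x N i f T = ∑ t ∈ T.1.attach, (koszulSign A T.1 t.1 * x t.1) •
      f ⟨T.1.erase t.1, (card_erase_of_mem_of_card_eq_succ t.2).2 T.2⟩ := by
  change koszulTotalD x N (koszulExtend A ℓ N i f) T.1 = _
  rw [koszulTotalD_apply, ← Finset.sum_attach]
  exact Finset.sum_congr rfl fun t _ ↦ by rw [koszulExtend_of_card_eq]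

theorem koszulTotalD_extend (f : {s : Finset (Fin ℓ) // s.card = i} → N) :
    koszulTotalD x N (koszulExtend A ℓ N i f) = koszulExtend A ℓ N (i + 1) (koszulD x N i f) := by
  ext T
  by_cases h : T.card = i + 1
  · rw [koszulExtend_of_card_eq _ h]
    rfl
  · rw [koszulExtend_of_card_ne _ h, koszulTotalD_apply]
    refine Finset.sum_eq_zero fun t ht ↦ ?_
    rw [koszulExtend_of_card_ne _ (mt (card_erase_of_mem_of_card_eq_succ ht).1 h), smul_zero]

theorem koszulD_component (g : Finset (Fin ℓ) → N) :
    koszulD x N i (koszulComponent A ℓ N i g) =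
      koszulComponent A ℓ N (i + 1) (koszulTotalD x N g) := by
  ext T
  rw [koszulD_apply]
  exact T.1.sum_attach fun t ↦ (koszulSign A T.1 t * x t) • g (T.1.erase t)

theorem koszulD_koszulD (f : {s : Finset (Fin ℓ) // s.card = i} → N) :
    koszulD x N (i + 1) (koszulD x N i f) = 0 := by
  have h : koszulExtend A ℓ N _ (koszulD x N (i + 1) (koszulD x N i f)) = 0 := by
    rw [← koszulTotalD_extend, ← koszulTotalD_extend, koszulTotalD_koszulTotalD]
  rw [← koszulComponent_extend (A := A) (koszulD x N (i + 1) _), h, map_zero]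

theorem koszulD_comp_koszulD : koszulD x N (i + 1) ∘ₗ koszulD x N i = 0 :=
  LinearMap.ext (koszulD_koszulD x)

theorem koszulD_compLeft {N' : Type*} [AddCommGroup N'] [Module A N'] (φ : N →ₗ[A] N')
    (f : {s : Finset (Fin ℓ) // s.card = i} → N) :
    koszulD x N' i (φ.compLeft _ f) = φ.compLeft _ (koszulD x N i f) := by
  ext T
  simp [koszulD_apply]

theorem exists_component_koszulTotalD_eq (hN : GeneratesEnd (Ideal.span (Set.range x)) N)
    {f : {s : Finset (Fin ℓ) // s.card = i} → N} (hf : koszulD x N i f = 0) :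
    ∃ g, koszulComponent A ℓ N i (koszulTotalD x N g) = f := by
  obtain ⟨g, hg⟩ := exists_koszulTotalD_eq x hN (f := koszulExtend A ℓ N i f) <| by
    rw [koszulTotalD_extend, hf, map_zero]
  exact ⟨g, by rw [hg, koszulComponent_extend]⟩

theorem koszulD_zero_injective_of_generatesEnd
    (hN : GeneratesEnd (Ideal.span (Set.range x)) N) : Function.Injective (koszulD x N 0) := by
  refine (injective_iff_map_eq_zero _).2 fun f hf ↦ ?_
  obtain ⟨g, rfl⟩ := exists_component_koszulTotalD_eq x hN hf
  ext ⟨T, hT⟩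
  obtain rfl := Finset.card_eq_zero.1 hT
  rfl

theorem koszulD_exact_of_generatesEnd (hN : GeneratesEnd (Ideal.span (Set.range x)) N) (i : ℕ) :
    Function.Exact (koszulD x N i) (koszulD x N (i + 1)) := by
  refine fun f ↦ ⟨fun hf ↦ ?_, ?_⟩
  · obtain ⟨g, rfl⟩ := exists_component_koszulTotalD_eq x hN hf
    exact ⟨koszulComponent A ℓ N i g, koszulD_component x g⟩
  · rintro ⟨g, rfl⟩
    exact koszulD_koszulD x g

theorem koszulD_zero_apply_singleton (f : {s : Finset (Fin ℓ) // s.card = 0} → N) (j : Fin ℓ) :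
    koszulD x N 0 f ⟨{j}, Finset.card_singleton j⟩ = x j • f ⟨∅, rfl⟩ := by
  have hsign : koszulSign A {j} j = 1 := by
    rw [← insert_empty_eq, koszulSign_insert_self, koszulSign, Finset.filter_empty,
      Finset.card_empty, pow_zero]
  change koszulTotalD x N (koszulExtend A ℓ N 0 f) {j} = _
  rw [koszulTotalD_apply, Finset.sum_singleton, Finset.erase_singleton, hsign, one_mul]
  rfl

theorem koszulD_zero_injective_iff : Function.Injective (koszulD x N 0) ↔
    Submodule.torsionBySet A N (Ideal.span (Set.range x)) = ⊥ := by
  have hD (f : {s : Finset (Fin ℓ) // s.card = 0} → N) :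
      koszulD x N 0 f = 0 ↔ ∀ j, x j • f ⟨∅, rfl⟩ = 0 := by
    refine ⟨fun h j ↦ by rw [← koszulD_zero_apply_singleton, h, Pi.zero_apply], fun h ↦ ?_⟩
    ext ⟨T, hT⟩
    obtain ⟨j, rfl⟩ := Finset.card_eq_one.1 hT
    exact (koszulD_zero_apply_singleton x f j).trans (h j)
  simp only [injective_iff_map_eq_zero, hD, ← Submodule.torsionBySet_eq_torsionBySet_span,
    torsionBySet_eq_bot_iff, Set.forall_mem_range]
  refine ⟨fun h y hy ↦ congrFun (h (fun _ ↦ y) hy) ⟨∅, rfl⟩, fun h f hf ↦ ?_⟩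
  ext ⟨T, hT⟩
  obtain rfl := Finset.card_eq_zero.1 hT
  exact h _ hf

section Complex

/-- The Koszul cochain complex with coefficients in `N`. -/
def koszulComplex (N : ModuleCat.{u} A) : CochainComplex (ModuleCat.{u} A) ℕ :=
  .of (fun i ↦ ModuleCat.of A ({s : Finset (Fin ℓ) // s.card = i} → N))
    (fun i ↦ ModuleCat.ofHom (koszulD x N i))
    fun i ↦ by rw [← ModuleCat.ofHom_comp, koszulD_comp_koszulD, ModuleCat.ofHom_zero]

theorem koszulComplex_d (N : ModuleCat.{u} A) (i : ℕ) :
    (koszulComplex x N).d i (i + 1) = ModuleCat.ofHom (koszulD x N i) :=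
  CochainComplex.of_d (fun i ↦ ModuleCat.of A ({s : Finset (Fin ℓ) // s.card = i} → N))
    (fun i ↦ ModuleCat.ofHom (koszulD x N i)) i

theorem koszulComplex_exactAt_zero_iff (N : ModuleCat.{u} A) :
    (koszulComplex x N).ExactAt 0 ↔ Function.Injective (koszulD x N 0) := by
  rw [HomologicalComplex.exactAt_iff' _ 0 0 1 (by simp) (by simp),
    ShortComplex.exact_iff_mono _ ((koszulComplex x N).shape 0 0 (by simp)),
    ModuleCat.mono_iff_injective]
  change Function.Injective ((koszulComplex x N).d 0 (0 + 1)) ↔ _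
  rw [koszulComplex_d]
  rfl

theorem koszulComplex_exactAt_succ_iff (N : ModuleCat.{u} A) (n : ℕ) :
    (koszulComplex x N).ExactAt (n + 1) ↔
      Function.Exact (koszulD x N n) (koszulD x N (n + 1)) := by
  rw [HomologicalComplex.exactAt_iff' _ n (n + 1) (n + 2) (by simp) (by simp),
    ShortComplex.ShortExact.moduleCat_exact_iff_function_exact]
  change Function.Exact ((koszulComplex x N).d n (n + 1))
    ((koszulComplex x N).d (n + 1) (n + 1 + 1)) ↔ _
  rw [koszulComplex_d, koszulComplex_d]
  rfl

/-- The map of Koszul complexes induced by a map of coefficients. -/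
def koszulComplexMap {N N' : ModuleCat.{u} A} (φ : N ⟶ N') :
    koszulComplex x N ⟶ koszulComplex x N' :=
  CochainComplex.ofHom (fun i ↦ ModuleCat.ofHom (φ.hom.compLeft _)) fun i ↦ by
    rw [koszulComplex_d, koszulComplex_d]
    exact ModuleCat.hom_ext <| LinearMap.ext fun f ↦ koszulD_compLeft x φ.hom f

theorem shortExact_koszulComplexMap {S : ShortComplex (ModuleCat.{u} A)} (hS : S.ShortExact) :
    (ShortComplex.mk (koszulComplexMap x S.f) (koszulComplexMap x S.g) <|
      HomologicalComplex.hom_ext _ _ fun _ ↦ ModuleCat.hom_ext <| LinearMap.ext fun f ↦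
        funext fun T ↦ LinearMap.congr_fun (ModuleCat.hom_ext_iff.1 S.zero) (f T)).ShortExact := by
  refine HomologicalComplex.shortExact_of_degreewise_shortExact _ fun i ↦
    ModuleCat.shortComplex_shortExact _ ?_ ?_ ?_
  · have hexact := (ShortComplex.ShortExact.moduleCat_exact_iff_function_exact S).1 hS.exact
    refine LinearMap.exact_iff.2 <| (LinearMap.ker_compLeft _ _).trans <|
      Eq.trans ?_ (LinearMap.range_compLeft _ _).symm
    rw [← hexact.linearMap_ker_eq]
  · exact hS.moduleCat_injective_f.comp_left
  · exact hS.moduleCat_surjective_g.comp_left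

theorem detectsTorsion_koszulComplex :
    DetectsTorsion (Ideal.span (Set.range x)) fun N n ↦ (koszulComplex x N).ExactAt n where
  zero_iff N := by rw [koszulComplex_exactAt_zero_iff, koszulD_zero_injective_iff]
  succ_iff {S} hS hF n := by
    have hK := shortExact_koszulComplexMap x hS
    simp only [HomologicalComplex.exactAt_iff_isZero_homology] at hF ⊢
    exact (hK.δIso n (n + 1) rfl (hF n) (hF (n + 1))).isZero_iff.symm
  of_generatesEnd {N} hN n := by
    cases n with
    | zero =>
      exact (koszulComplex_exactAt_zero_iff x N).2 (koszulD_zero_injective_of_generatesEnd x hN)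
    | succ n =>
      exact (koszulComplex_exactAt_succ_iff x N n).2 (koszulD_exact_of_generatesEnd x hN n)

end Complex

theorem kosD_eq_koszulD {A : Type} [CommRing A] (x : Fin ℓ → A) (i : ℕ) :
    kosD A x i = koszulD x A i :=
  LinearMap.ext fun f ↦ funext fun T ↦ (koszulD_apply x f T).symm

end Koszul

section Tor

open TensorProduct

section Balance

variable {R : Type*} [CommRing R]
variable {X F Y Z P M : Type*} [AddCommGroup X] [Module R X] [AddCommGroup F] [Module R F]
  [AddCommGroup Y] [Module R Y] [AddCommGroup Z] [Module R Z] [AddCommGroup P] [Module R P]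
  [AddCommGroup M] [Module R M]
variable {i : X →ₗ[R] F} {q : F →ₗ[R] Y} {j : Z →ₗ[R] P} {r : P →ₗ[R] M}

theorem lTensor_injective_of_rTensor_injective [Module.Flat R F] (hiq : Function.Exact i q)
    (hq : Function.Surjective q) (hj : Function.Injective j) (hjr : Function.Exact j r)
    (hr : Function.Surjective r) (h : Function.Injective (i.rTensor M)) :
    Function.Injective (j.lTensor Y) := by
  refine (injective_iff_map_eq_zero _).2 fun y hy ↦ ?_
  obtain ⟨f, rfl⟩ := LinearMap.rTensor_surjective Z hq y
  obtain ⟨a, ha⟩ : ∃ a, i.rTensor P a = j.lTensor F f := by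
    refine (rTensor_exact P hiq hq _).1 ?_
    rwa [← LinearMap.comp_apply, LinearMap.rTensor_comp_lTensor, ← LinearMap.lTensor_comp_rTensor]
  obtain ⟨b, rfl⟩ : ∃ b, j.lTensor X b = a := by
    refine (lTensor_exact X hjr hr _).1 (h ?_)
    rw [← LinearMap.comp_apply, LinearMap.rTensor_comp_lTensor, ← LinearMap.lTensor_comp_rTensor,
      LinearMap.comp_apply, ha, map_zero]
    exact (lTensor_exact F hjr hr).apply_apply_eq_zero f
  obtain rfl : i.rTensor Z b = f := by
    refine Module.Flat.lTensor_preserves_injective_linearMap j hj ?_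
    rw [← ha, ← LinearMap.comp_apply, LinearMap.lTensor_comp_rTensor,
      ← LinearMap.rTensor_comp_lTensor, LinearMap.comp_apply]
  exact (rTensor_exact Z hiq hq).apply_apply_eq_zero b

theorem rTensor_injective_iff_lTensor_injective [Module.Flat R F] [Module.Flat R P]
    (hi : Function.Injective i) (hiq : Function.Exact i q) (hq : Function.Surjective q)
    (hj : Function.Injective j) (hjr : Function.Exact j r) (hr : Function.Surjective r) :
    Function.Injective (i.rTensor M) ↔ Function.Injective (j.lTensor Y) := by
  refine ⟨lTensor_injective_of_rTensor_injective hiq hq hj hjr hr, fun h ↦ ?_⟩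
  rw [← LinearMap.lTensor_inj_iff_rTensor_inj]
  exact lTensor_injective_of_rTensor_injective hjr hr hi hiq hq <|
    (LinearMap.lTensor_inj_iff_rTensor_inj ..).1 h

theorem injective_iff_exact_comp {f : X →ₗ[R] F} (hf : Function.Exact f q)
    (hq : Function.Surjective q) (g : Y →ₗ[R] Z) :
    Function.Injective g ↔ Function.Exact f (g ∘ₗ q) := by
  rw [injective_iff_map_eq_zero, hq.forall]
  exact forall_congr' fun v ↦ by
    rw [← hf v, LinearMap.comp_apply]
    exact ⟨fun h ↦ ⟨h, fun hv ↦ by rw [hv, map_zero]⟩, Iff.mp⟩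

end Balance

section Resolution

variable {R : Type} [CommRing R] {M : ModuleCat.{0} R} (P : ProjectiveResolution M)

/-- The complex `X ⊗ P`, whose homology is `Tor(X, M)`. -/
abbrev tensorResolution (X : ModuleCat.{0} R) : ChainComplex (ModuleCat.{0} R) ℕ :=
  (((MonoidalCategory.tensoringLeft _).obj X).mapHomologicalComplex _).obj P.complex

theorem torV_iff_exactAt (X : ModuleCat.{0} R) (n : ℕ) :
    torV R X M n ↔ (tensorResolution P X).ExactAt n := by
  rw [torV, ← ModuleCat.isZero_iff_subsingleton, HomologicalComplex.exactAt_iff_isZero_homology]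
  exact (P.isoLeftDerivedObj ((MonoidalCategory.tensoringLeft _).obj X) n).isZero_iff

theorem torV_succ_iff_exact (X : ModuleCat.{0} R) (n : ℕ) :
    torV R X M (n + 1) ↔ Function.Exact ((P.complex.d (n + 2) (n + 1)).hom.lTensor X)
      ((P.complex.d (n + 1) n).hom.lTensor X) := by
  rw [torV_iff_exactAt P, HomologicalComplex.exactAt_iff' _ (n + 2) (n + 1) n (by simp) (by simp),
    ShortComplex.ShortExact.moduleCat_exact_iff_function_exact]
  rfl

instance flat_projectiveResolution (n : ℕ) : Module.Flat R (P.complex.X n) :=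
  have : Projective (ModuleCat.of R (P.complex.X n)) := P.projective n
  have := (IsProjective.iff_projective _).2 this
  inferInstance

theorem torV_succ_of_flat (X M : ModuleCat.{0} R) [Module.Flat R X] (n : ℕ) :
    torV R X M (n + 1) :=
  let P := projectiveResolution M
  (torV_succ_iff_exact P X n).2 <| Module.Flat.lTensor_exact X <|
    (ShortComplex.ShortExact.moduleCat_exact_iff_function_exact _).1 (P.exact_succ n)

/-- The map `X ⊗ P ⟶ Y ⊗ P` induced by `X ⟶ Y`. -/
abbrev tensorResolutionMap {X Y : ModuleCat.{0} R} (f : X ⟶ Y) :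
    tensorResolution P X ⟶ tensorResolution P Y :=
  (NatTrans.mapHomologicalComplex ((MonoidalCategory.tensoringLeft _).map f) _).app P.complex

variable {S : ShortComplex (ModuleCat.{0} R)}

theorem shortExact_tensorResolutionMap (hS : S.ShortExact) :
    (ShortComplex.mk (tensorResolutionMap P S.f) (tensorResolutionMap P S.g) <|
      HomologicalComplex.hom_ext _ _ fun n ↦ (MonoidalCategory.comp_whiskerRight ..).symm.trans <|
        (congrArg (MonoidalCategory.whiskerRight · (P.complex.X n)) S.zero).trans <|
          MonoidalPreadditive.zero_whiskerRight).ShortExact := by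
  refine HomologicalComplex.shortExact_of_degreewise_shortExact _ fun n ↦
    ModuleCat.shortComplex_shortExact _ ?_ ?_ ?_
  · exact rTensor_exact (P.complex.X n)
      ((ShortComplex.ShortExact.moduleCat_exact_iff_function_exact S).1 hS.exact)
      hS.moduleCat_surjective_g
  · exact Module.Flat.rTensor_preserves_injective_linearMap S.f.hom hS.moduleCat_injective_f
  · exact LinearMap.rTensor_surjective _ hS.moduleCat_surjective_g

theorem torV_succ_succ_iff (hS : S.ShortExact) [Module.Flat R S.X₂] (M : ModuleCat.{0} R) (n : ℕ) :
    torV R S.X₃ M (n + 2) ↔ torV R S.X₁ M (n + 1) := by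
  let P := projectiveResolution M
  have hF (n : ℕ) := (torV_iff_exactAt P _ _).1 (torV_succ_of_flat S.X₂ M n)
  simp only [torV_iff_exactAt P, HomologicalComplex.exactAt_iff_isZero_homology] at hF ⊢
  exact ((shortExact_tensorResolutionMap P hS).δIso (n + 2) (n + 1) rfl (hF _) (hF _)).isZero_iff

theorem torV_one_iff (hS : S.ShortExact) [Module.Flat R S.X₂] (M : ModuleCat.{0} R) :
    torV R S.X₃ M 1 ↔ Function.Injective (S.f.hom.rTensor M) := by
  let P := projectiveResolution M
  let d := (P.complex.d 1 0).hom
  let ε : P.complex.X 0 →ₗ[R] M := (P.π.f 0).hom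
  have hd : Function.Exact (P.complex.d 2 1).hom d.rangeRestrict := by
    refine LinearMap.exact_iff.2 <| d.ker_rangeRestrict.trans <| LinearMap.exact_iff.1 ?_
    exact (ShortComplex.ShortExact.moduleCat_exact_iff_function_exact _).1 (P.exact_succ 0)
  have hdε : Function.Exact d ε :=
    (ShortComplex.ShortExact.moduleCat_exact_iff_function_exact _).1 P.exact₀
  have hε : Function.Surjective ε := (ModuleCat.epi_iff_surjective (P.π.f 0)).1 inferInstance
  have hS' := (ShortComplex.ShortExact.moduleCat_exact_iff_function_exact S).1 hS.exact
  have hbalance : Function.Injective (S.f.hom.rTensor M) ↔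
      Function.Injective (d.range.subtype.lTensor S.X₃) :=
    rTensor_injective_iff_lTensor_injective hS.moduleCat_injective_f hS' hS.moduleCat_surjective_g
      d.range.injective_subtype
      (LinearMap.exact_iff.2 <| hdε.linearMap_ker_eq.trans d.range.range_subtype.symm) hε
  rw [torV_succ_iff_exact P, hbalance, injective_iff_exact_comp
    (lTensor_exact S.X₃ hd d.surjective_rangeRestrict)
    (LinearMap.lTensor_surjective _ d.surjective_rangeRestrict), ← LinearMap.lTensor_comp]
  rfl

theorem forall_torV_iff (hS : S.ShortExact) [Module.Flat R S.X₂] (M : ModuleCat.{0} R) :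
    (∀ n, torV R S.X₃ M (n + 1)) ↔
      Function.Injective (S.f.hom.rTensor M) ∧ ∀ n, torV R S.X₁ M (n + 1) := by
  rw [← torV_one_iff hS, ← Nat.and_forall_add_one]
  simp only [torV_succ_succ_iff hS]

end Resolution

end Tor

section KosCoker

open TensorProduct

variable {A : Type} [CommRing A] {ℓ : ℕ} (x : Fin ℓ → A)

/-- The projection `Kⁱ → Sᵢ` of a Koszul cochain module onto the cokernel of the incoming
differential; in degree `0`, evaluation at the empty set identifies `K⁰` with `S₀ = A`. -/
def kosProj : (i : ℕ) → KosTerm A ℓ i →ₗ[A] KosCoker A x i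
  | 0 => LinearMap.proj ⟨∅, Finset.card_empty⟩
  | m + 1 => (LinearMap.range (kosD A x m)).mkQ

/-- The map `Sᵢ → Kⁱ⁺¹` induced by the Koszul differential. -/
def kosIncl : (i : ℕ) → KosCoker A x i →ₗ[A] KosTerm A ℓ (i + 1)
  | 0 => kosD A x 0 ∘ₗ LinearMap.pi fun _ ↦ LinearMap.id
  | m + 1 => (LinearMap.range (kosD A x m)).liftQ (kosD A x (m + 1)) <|
      LinearMap.range_le_ker_iff.2 <| by
        rw [kosD_eq_koszulD, kosD_eq_koszulD, koszulD_comp_koszulD]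

theorem kosProj_surjective : (i : ℕ) → Function.Surjective (kosProj x i)
  | 0 => fun a ↦ ⟨fun _ ↦ a, rfl⟩
  | m + 1 => (LinearMap.range (kosD A x m)).mkQ_surjective

/-- The identification of `K⁰` with `S₀`. -/
def kosProjZeroEquiv : KosTerm A ℓ 0 ≃ₗ[A] KosCoker A x 0 :=
  .ofBijective (kosProj x 0) <| by
    refine ⟨fun f g h ↦ funext fun ⟨T, hT⟩ ↦ ?_, kosProj_surjective x 0⟩
    obtain rfl := Finset.card_eq_zero.1 hT
    exact h

theorem kosIncl_comp_kosProj : (i : ℕ) → kosIncl x i ∘ₗ kosProj x i = kosD A x i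
  | 0 => LinearMap.ext fun _ ↦ congrArg (kosD A x 0) <| (kosProjZeroEquiv x).injective rfl
  | m + 1 => (LinearMap.range (kosD A x m)).liftQ_mkQ _ _

theorem kosD_exact_kosProj (i : ℕ) : Function.Exact (kosD A x i) (kosProj x (i + 1)) :=
  LinearMap.exact_map_mkQ_range _

theorem kosIncl_exact_kosProj (i : ℕ) : Function.Exact (kosIncl x i) (kosProj x (i + 1)) := by
  rw [LinearMap.exact_iff, ← LinearMap.range_comp_of_range_eq_top (kosIncl x i)
    (LinearMap.range_eq_top.2 (kosProj_surjective x i)), kosIncl_comp_kosProj]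
  exact (kosD_exact_kosProj x i).linearMap_ker_eq

theorem kosIncl_injective_iff (i : ℕ) :
    Function.Injective (kosIncl x i) ↔ (koszulComplex x (ModuleCat.of A A)).ExactAt i := by
  cases i with
  | zero =>
    rw [koszulComplex_exactAt_zero_iff, ← kosD_eq_koszulD, ← kosIncl_comp_kosProj]
    exact (Function.Injective.of_comp_iff' _ (kosProjZeroEquiv x).bijective).symm
  | succ i =>
    rw [koszulComplex_exactAt_succ_iff, injective_iff_exact_comp (kosD_exact_kosProj x i)
      (kosProj_surjective x (i + 1)), kosIncl_comp_kosProj, kosD_eq_koszulD, kosD_eq_koszulD]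

section BaseChange

variable {R : Type*} [CommRing R] [Algebra R A]
variable {M N : Type*} [AddCommGroup M] [Module R M] [AddCommGroup N] [Module R N] [Module A N]
  [IsScalarTower R A N] {g : M →ₗ[R] N}

/-- Base change commutes with finite powers: `Aⁿ ⊗ M ≃ Nⁿ` where `N = A ⊗ M`. -/
def piTensorEquiv (hg : IsBaseChange A g) (κ : Type*) [Fintype κ] [DecidableEq κ] :
    (κ → A) ⊗[R] M ≃ₗ[R] (κ → N) :=
  piLeft R M (fun _ : κ ↦ A) ≪≫ₗ
    LinearEquiv.piCongrRight fun _ ↦ hg.equiv.restrictScalars R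

theorem piTensorEquiv_tmul (hg : IsBaseChange A g) {κ : Type*} [Fintype κ] [DecidableEq κ]
    (f : κ → A) (m : M) (s : κ) : piTensorEquiv hg κ (f ⊗ₜ[R] m) s = f s • g m := by
  simp [piTensorEquiv, hg.equiv_tmul]

theorem koszulD_comp_piTensorEquiv (hg : IsBaseChange A g) (i : ℕ) :
    (koszulD x N i).restrictScalars R ∘ₗ (piTensorEquiv hg _).toLinearMap =
      (piTensorEquiv hg _).toLinearMap ∘ₗ ((kosD A x i).restrictScalars R).rTensor M := by
  refine TensorProduct.ext' fun f m ↦ funext fun T ↦ ?_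
  change koszulD x N i (piTensorEquiv hg _ (f ⊗ₜ[R] m)) T =
    piTensorEquiv hg _ (kosD A x i f ⊗ₜ[R] m) T
  simp only [kosD_eq_koszulD, piTensorEquiv_tmul, koszulD_apply, Finset.sum_smul, smul_smul,
    smul_eq_mul]

end BaseChange

section Tor

variable {R : Type} [CommRing R] [Algebra R A]

instance isScalarTower_kosCoker (i : ℕ) : IsScalarTower R A (KosCoker A x i) :=
  .of_algebraMap_smul fun _ _ ↦ rfl

theorem shortExact_kosIncl {i : ℕ} (h : (koszulComplex x (ModuleCat.of A A)).ExactAt i) :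
    (ModuleCat.shortComplexOfCompEqZero ((kosIncl x i).restrictScalars R)
      ((kosProj x (i + 1)).restrictScalars R) <|
        LinearMap.ext (kosIncl_exact_kosProj x i).apply_apply_eq_zero).ShortExact :=
  ModuleCat.shortComplex_shortExact _ (kosIncl_exact_kosProj x i)
    ((kosIncl_injective_iff x i).2 h) (kosProj_surjective x (i + 1))

variable {M N : Type} [AddCommGroup M] [Module R M] [AddCommGroup N] [Module R N] [Module A N]
  [IsScalarTower R A N] {g : M →ₗ[R] N}

theorem rTensor_kosIncl_injective_iff (hg : IsBaseChange A g) (i : ℕ) :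
    Function.Injective (((kosIncl x i).restrictScalars R).rTensor M) ↔
      (koszulComplex x (ModuleCat.of A N)).ExactAt i := by
  have hcomp (i : ℕ) : ((kosIncl x i).restrictScalars R).rTensor M ∘ₗ
      ((kosProj x i).restrictScalars R).rTensor M = ((kosD A x i).restrictScalars R).rTensor M := by
    rw [← LinearMap.rTensor_comp, ← kosIncl_comp_kosProj]
    rfl
  cases i with
  | zero =>
    rw [koszulComplex_exactAt_zero_iff,
      ← Function.Injective.of_comp_iff' _
        (((kosProjZeroEquiv x).restrictScalars R).rTensor M).bijective,
      ← Function.Injective.of_comp_iff' (koszulD x N 0) (piTensorEquiv hg _).bijective]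
    refine (Function.Injective.of_comp_iff (piTensorEquiv hg _).injective _).symm.trans ?_
    exact Eq.to_iff <| congrArg Function.Injective <| congrArg DFunLike.coe <|
      (congrArg _ (hcomp 0)).trans (koszulD_comp_piTensorEquiv x hg 0).symm
  | succ i =>
    have hexact : Function.Exact ((kosD A x i).restrictScalars R)
        ((kosProj x (i + 1)).restrictScalars R) := kosD_exact_kosProj x i
    have hsurj : Function.Surjective ((kosProj x (i + 1)).restrictScalars R) :=
      kosProj_surjective x (i + 1)
    rw [koszulComplex_exactAt_succ_iff, injective_iff_exact_comp (rTensor_exact M hexact hsurj)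
      (LinearMap.rTensor_surjective M hsurj), hcomp]
    exact (Function.Exact.iff_of_ladder_linearEquiv (koszulD_comp_piTensorEquiv x hg i)
      (koszulD_comp_piTensorEquiv x hg (i + 1))).symm

theorem forall_torV_kosCoker_iff [Module.Flat R A] (hg : IsBaseChange A g) {k : ℕ}
    (hA : ∀ i < k, (koszulComplex x (ModuleCat.of A A)).ExactAt i) :
    (∀ n, torV R (ModuleCat.of R (KosCoker A x k)) (ModuleCat.of R M) (n + 1)) ↔
      ∀ i < k, (koszulComplex x (ModuleCat.of A N)).ExactAt i := by
  induction k with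
  | zero =>
    have : Module.Flat R (KosCoker A x 0) :=
      have : Module.Flat R (KosTerm A ℓ 0) := Module.Flat.trans R A _
      Module.Flat.of_linearEquiv ((kosProjZeroEquiv x).restrictScalars R).symm
    simp [torV_succ_of_flat]
  | succ k ih =>
    have hflat : Module.Flat R (KosTerm A ℓ (k + 1)) := Module.Flat.trans R A _
    rw [Nat.forall_lt_succ_right, ← ih fun i hi ↦ hA i (hi.trans k.lt_succ_self), and_comm,
      ← rTensor_kosIncl_injective_iff x hg]
    exact forall_torV_iff (shortExact_kosIncl x (hA k k.lt_succ_self)) _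

end Tor

end KosCoker

section AssociatedPrimes

open Submodule

theorem associatedPrimes_directSum {R : Type*} [CommRing R] {ι : Type*} (C : ι → Type*)
    [∀ i, AddCommGroup (C i)] [∀ i, Module R (C i)] :
    associatedPrimes R (DirectSum ι C) = ⋃ i, associatedPrimes R (C i) := by
  classical
  refine subset_antisymm ?_ <| Set.iUnion_subset fun i ↦
    associatedPrimes.subset_of_injective (f := DirectSum.lof R ι C i) (DirectSum.of_injective i)
  rintro I ⟨hI, f, hf⟩
  have hle (i : ι) : colon (⊥ : Submodule R (DirectSum ι C)) {f} ≤ colon ⊥ {f i} := fun r hr ↦ by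
    rw [mem_colon_singleton, mem_bot] at hr ⊢
    rw [← DirectSum.smul_apply, hr, DirectSum.zero_apply]
  have hinf : (DFinsupp.support f).inf (fun i ↦ colon (⊥ : Submodule R (C i)) {f i}) ≤ I := by
    refine le_trans (fun r hr ↦ ?_) (Ideal.le_radical.trans hf.ge)
    rw [mem_colon_singleton, mem_bot]
    ext i
    rw [DirectSum.smul_apply, DirectSum.zero_apply]
    by_cases hi : i ∈ DFinsupp.support f
    · simpa only [mem_colon_singleton, mem_bot] using (mem_finsetInf.1 hr) i hi
    · rw [DFinsupp.notMem_support_iff.1 hi, smul_zero]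
  obtain ⟨i, -, hi⟩ := (Ideal.IsPrime.inf_le' hI).1 hinf
  exact Set.mem_iUnion.2 ⟨i, hI, f i, le_antisymm (hf.le.trans (Ideal.radical_mono (hle i)))
    (hI.radical_le_iff.2 hi)⟩

theorem associatedPrimes_subset_of_essential {R : Type*} [CommRing R] [IsNoetherianRing R]
    {C E : Type*} [AddCommGroup C] [Module R C] [AddCommGroup E] [Module R E] {f : C →ₗ[R] E}
    (hf : Function.Injective f) (hess : ∀ K : Submodule R E, K ≠ ⊥ → K ⊓ LinearMap.range f ≠ ⊥) :
    associatedPrimes R E ⊆ associatedPrimes R C := by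
  intro I hI
  rw [AssociatedPrimes.mem_iff, isAssociatedPrime_iff] at hI ⊢
  obtain ⟨hprime, e, rfl⟩ := hI
  have he : e ≠ 0 := by
    rintro rfl
    exact hprime.ne_top (by simp)
  obtain ⟨_, ⟨hr, c, rfl⟩, hc⟩ := exists_mem_ne_zero_of_ne_bot <|
    hess (span R {e}) (mt span_singleton_eq_bot.1 he)
  obtain ⟨r, hr⟩ := mem_span_singleton.1 hr
  have hr' : r ∉ colon (⊥ : Submodule R E) {e} := by
    rwa [mem_colon_singleton, mem_bot, hr]
  refine ⟨hprime, c, Ideal.ext fun a ↦ ?_⟩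
  rw [mem_colon_singleton (N := (⊥ : Submodule R C)), mem_bot, ← map_eq_zero_iff f hf, map_smul,
    ← hr, smul_smul, ← mem_bot R, ← mem_colon_singleton, hprime.mul_mem_iff_mem_or_mem,
    or_iff_left hr']

theorem mem_associatedPrimes_iff_torsionBySet_ne_bot {A : Type*} [CommRing A] [IsNoetherianRing A]
    {N : Type*} [AddCommGroup N] [Module A N] (I : Ideal A) [hI : I.IsMaximal] :
    I ∈ associatedPrimes A N ↔ torsionBySet A N I ≠ ⊥ := by
  rw [AssociatedPrimes.mem_iff, isAssociatedPrime_iff, Ne, torsionBySet_eq_bot_iff]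
  push Not
  refine (and_iff_right hI.isPrime).trans <| exists_congr fun y ↦ ⟨?_, fun ⟨hy, hy0⟩ ↦ ?_⟩
  · rintro rfl
    refine ⟨fun a ha ↦ mem_colon_singleton.1 ha, ?_⟩
    rintro rfl
    exact hI.ne_top (by simp)
  · refine hI.eq_of_le (fun htop ↦ hy0 ?_) fun a ha ↦ mem_colon_singleton.2 (hy a ha)
    have h1 : (1 : A) ∈ colon (⊥ : Submodule A N) {y} := htop ▸ mem_top
    rwa [mem_colon_singleton, one_smul] at h1

variable {R : Type*} [CommRing R] [IsNoetherianRing R]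

theorem notMem_associatedPrimes_iff_torsionBySet_eq_bot (p : Ideal R) [p.IsPrime]
    (C : Type*) [AddCommGroup C] [Module R C] :
    p ∉ associatedPrimes R C ↔ torsionBySet (Localization.AtPrime p)
      (LocalizedModule p.primeCompl C) (IsLocalRing.maximalIdeal (Localization.AtPrime p)) = ⊥ := by
  have hA : IsNoetherianRing (Localization.AtPrime p) :=
    IsLocalization.isNoetherianRing p.primeCompl _ inferInstance
  have hp : p = (IsLocalRing.maximalIdeal (Localization.AtPrime p)).comap (algebraMap R _) :=
    (Localization.AtPrime.under_maximalIdeal (I := p)).symm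
  open Module.associatedPrimes in
  rw [not_iff_comm, ← Ne, ← mem_associatedPrimes_iff_torsionBySet_ne_bot,
    ← preimage_comap_associatedPrimes_eq_associatedPrimes_of_isLocalizedModule p.primeCompl
      (Localization.AtPrime p) (LocalizedModule.mkLinearMap p.primeCompl C), Set.mem_preimage, ← hp]

end AssociatedPrimes

section Cosyzygies

open IsLocalRing

variable {A : Type} [CommRing A] [IsLocalRing A]

theorem torsionBySet_eq_bot_of_succ_le_rdepth (hA : (maximalIdeal A).FG) {N : Type}
    [AddCommGroup N] [Module A N] {k : ℕ} (h : (k + 1 : ℕ) ≤ rdepth A N) :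
    Submodule.torsionBySet A N (maximalIdeal A) = ⊥ :=
  ((detectsTorsion_ext _).zero_iff _).1 <|
    (le_rdepth_iff_forall_lt hA (detectsTorsion_ext _) _).1 h 0 k.succ_pos

theorem succ_le_rdepth_iff_of_injective (hA : (maximalIdeal A).FG) {N E N' : Type}
    [AddCommGroup N] [Module A N] [AddCommGroup E] [Module A E] [AddCommGroup N'] [Module A N']
    {f : N →ₗ[A] E} {g : E →ₗ[A] N'} (hf : Function.Injective f) (hfg : Function.Exact f g)
    (hg : Function.Surjective g) (hE : Module.Injective A E)
    (htor : Submodule.torsionBySet A E (maximalIdeal A) = ⊥) (k : ℕ) :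
    (k + 1 : ℕ) ≤ rdepth A N ↔ (k : ℕ∞) ≤ rdepth A N' := by
  have hV := detectsTorsion_ext (maximalIdeal A)
  have hS : (ModuleCat.shortComplexOfCompEqZero f g hfg.linearMap_comp_eq_zero).ShortExact :=
    ModuleCat.shortComplex_shortExact _ hfg hf hg
  have hE : GeneratesEnd (maximalIdeal A) E := generatesEnd_of_injective hA htor
  simp only [le_rdepth_iff_forall_lt hA hV]
  exact hV.forall_lt_succ_iff hS (hV.of_generatesEnd (N := ModuleCat.of A E) hE) k

variable {R : Type} [CommRing R] [IsNoetherianRing R] (p : PrimeSpectrum R)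

theorem maximalIdeal_localization_fg : (maximalIdeal (Localization.AtPrime p.asIdeal)).FG := by
  have : IsNoetherianRing (Localization.AtPrime p.asIdeal) :=
    IsLocalization.isNoetherianRing p.asIdeal.primeCompl _ inferInstance
  exact IsNoetherian.noetherian _

theorem succ_le_depthAt_iff {C E C' : Type} [AddCommGroup C] [Module R C] [AddCommGroup E]
    [Module R E] [AddCommGroup C'] [Module R C'] {f : C →ₗ[R] E} {g : E →ₗ[R] C'}
    (hf : IsInjectiveEnvelope R f) (hfg : Function.Exact f g) (hg : Function.Surjective g)
    (k : ℕ) : (k + 1 : ℕ) ≤ depthAt R p C ↔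
      p.asIdeal ∉ associatedPrimes R C ∧ (k : ℕ∞) ≤ depthAt R p C' := by
  let S := p.asIdeal.primeCompl
  have hA := maximalIdeal_localization_fg p
  have hAss (h : p.asIdeal ∉ associatedPrimes R C) :
      (k + 1 : ℕ) ≤ depthAt R p C ↔ (k : ℕ∞) ≤ depthAt R p C' := by
    obtain ⟨hinj, hf, hess⟩ := hf
    have htor : Submodule.torsionBySet (Localization.AtPrime p.asIdeal) (LocalizedModule S E)
        (maximalIdeal (Localization.AtPrime p.asIdeal)) = ⊥ :=
      (notMem_associatedPrimes_iff_torsionBySet_eq_bot _ _).1 <|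
        mt (associatedPrimes_subset_of_essential hf hess ·) h
    have hexact : Function.Exact (LocalizedModule.map S f) (LocalizedModule.map S g) :=
      LocalizedModule.map_exact S f g hfg
    rw [depthAt, depthAt]
    exact succ_le_rdepth_iff_of_injective hA (LocalizedModule.map_injective S f hf)
      hexact (LocalizedModule.map_surjective S g hg)
      (Module.injective_of_isLocalizedModule S (LocalizedModule.mkLinearMap S E)) htor k
  by_cases h : p.asIdeal ∈ associatedPrimes R C
  · refine iff_of_false (fun hk ↦ ?_) (fun hk ↦ hk.1 h)
    exact (notMem_associatedPrimes_iff_torsionBySet_eq_bot _ _).2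
      (torsionBySet_eq_bot_of_succ_le_rdepth hA hk) h
  · rw [hAss h, and_iff_right h]

theorem le_depthAt_cosyzygy_iff {M : Type} [AddCommGroup M] [Module R M] (seq : CosyzygySeq R M)
    (k n : ℕ) : (k : ℕ∞) ≤ depthAt R p (seq.C n) ↔
      ∀ i < k, p.asIdeal ∉ associatedPrimes R (seq.C (n + i)) := by
  induction k generalizing n with
  | zero => simp
  | succ k ih =>
    let q := (seq.isoSucc n).symm.toLinearMap ∘ₗ (LinearMap.range (seq.emb n)).mkQ
    have hexact : Function.Exact (seq.emb n) q := by
      refine LinearMap.exact_iff.2 ?_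
      rw [LinearEquiv.ker_comp, Submodule.ker_mkQ]
    rw [succ_le_depthAt_iff p (seq.env n) hexact <|
      (seq.isoSucc n).symm.surjective.comp (Submodule.mkQ_surjective _), ih,
      Nat.forall_lt_succ_left]
    exact and_congr_right' <| forall₂_congr fun i _ ↦ by rw [Nat.add_right_comm, Nat.add_assoc]

theorem le_depthAt_iff_notMem_associatedPrimes {M : Type} [AddCommGroup M] [Module R M]
    (seq : CosyzygySeq R M) (k : ℕ) : (k : ℕ∞) ≤ depthAt R p M ↔
      p.asIdeal ∉ associatedPrimes R (DirectSum (Fin k) fun i ↦ seq.C i.1) := by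
  have e : LocalizedModule p.asIdeal.primeCompl M ≃ₗ[Localization.AtPrime p.asIdeal]
      LocalizedModule p.asIdeal.primeCompl (seq.C 0) :=
    IsLocalizedModule.mapEquiv p.asIdeal.primeCompl (LocalizedModule.mkLinearMap _ M)
      (LocalizedModule.mkLinearMap _ (seq.C 0)) _ seq.iso0.symm
  have hzero (i : ℕ) : p.asIdeal ∉ associatedPrimes R (seq.C (0 + i)) ↔
      p.asIdeal ∉ associatedPrimes R (seq.C i) := by rw [Nat.zero_add]
  rw [depthAt, rdepth_congr e, ← depthAt, le_depthAt_cosyzygy_iff p seq, associatedPrimes_directSum]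
  simp only [hzero, Set.mem_iUnion, not_exists, Fin.forall_iff]

end Cosyzygies

section Tor

variable {R : Type} [CommRing R] [IsNoetherianRing R] (p : PrimeSpectrum R)

theorem forall_torV_kosCoker_iff_le_depthAt {k ℓ : ℕ} (hk : (k : ℕ∞) ≤ ringDepthAt R p)
    {x : Fin ℓ → Localization.AtPrime p.asIdeal}
    (hx : Ideal.span (Set.range x) = IsLocalRing.maximalIdeal (Localization.AtPrime p.asIdeal))
    (M : Type) [AddCommGroup M] [Module R M] :
    (∀ n, torV R (ModuleCat.of R (KosCoker (Localization.AtPrime p.asIdeal) x k))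
      (ModuleCat.of R M) (n + 1)) ↔ (k : ℕ∞) ≤ depthAt R p M := by
  have hA := maximalIdeal_localization_fg p
  have hV := hx ▸ detectsTorsion_koszulComplex x
  have hflat : Module.Flat R (Localization.AtPrime p.asIdeal) :=
    IsLocalization.flat _ p.asIdeal.primeCompl
  have hbase : IsBaseChange (Localization.AtPrime p.asIdeal)
      (LocalizedModule.mkLinearMap p.asIdeal.primeCompl M) :=
    (isLocalizedModule_iff_isBaseChange p.asIdeal.primeCompl _ _).1 inferInstance
  rw [ringDepthAt, le_rdepth_iff_forall_lt hA hV] at hk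
  rw [depthAt, le_rdepth_iff_forall_lt hA hV]
  exact forall_torV_kosCoker_iff x hbase hk

end Tor

/-- for a prime `p` of a commutative noetherian ring, `0 < k ≤ depth(R_p)`
and an `R`-module `M`, the following are equivalent: (i) `Tor_j(S_k(pR_p; R_p), M) = 0`
for all `j ≥ 1`; (ii) `depth_{R_p}(M_p) ≥ k`; (iii) `p ∉ Ass(⊕_{i=0}^{k-1} Ω_{-i}(M))`. -/
theorem stmt8 (R : Type) [CommRing R] [IsNoetherianRing R] (p : PrimeSpectrum R)
    (k : ℕ) (hk : 0 < k) (hkd : (k : ℕ∞) ≤ ringDepthAt R p)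
    (ℓ : ℕ) (x : Fin ℓ → Localization.AtPrime p.asIdeal)
    (hx : Ideal.span (Set.range x) =
      Ideal.map (algebraMap R (Localization.AtPrime p.asIdeal)) p.asIdeal)
    (M : Type) [AddCommGroup M] [Module R M] :
    ((∀ j : ℕ, 1 ≤ j →
        torV R (ModuleCat.of R (KosCoker (Localization.AtPrime p.asIdeal) x k))
          (ModuleCat.of R M) j) ↔
      (k : ℕ∞) ≤ depthAt R p M) ∧
    (∀ seq : CosyzygySeq R M,
      ((k : ℕ∞) ≤ depthAt R p M ↔
        p.asIdeal ∉ associatedPrimes R (DirectSum (Fin k) fun i => ↥(seq.C i.1)))) := by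
  have hx' : Ideal.span (Set.range x) =
      IsLocalRing.maximalIdeal (Localization.AtPrime p.asIdeal) :=
    hx.trans Localization.AtPrime.map_eq_maximalIdeal
  refine ⟨?_, fun seq ↦ le_depthAt_iff_notMem_associatedPrimes p seq k⟩
  rw [← forall_torV_kosCoker_iff_le_depthAt p hkd hx' M]
  exact ⟨fun h n ↦ h (n + 1) n.succ_pos, fun h j hj ↦ Nat.sub_add_cancel hj ▸ h (j - 1)⟩
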